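/- For every natural number ν, the complex Clifford algebra Cℂ(2ν) of even dimensionality is isomorphic as a ℂ-algebra to the full matrix algebra Matrix (Fin (2^ν)) (Fin (2^ν)) ℂ of 2^ν × 2^ν complex matrices. -/

import Mathlib

/-- `Cℂ(n)`: the Clifford algebra over `ℂ` of the sum-of-squares form on `Fin n → ℂ`. -/
noncomputable abbrev ComplexClifford (n : ℕ) :=
  CliffordAlgebra (QuadraticMap.weightedSumSquares ℂ (fun _ : Fin n => (1 : ℂ)))

/-!
Adjoining a hyperbolic plane to a quadratic form `Q` replaces its Clifford algebra by `2 × 2`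
matrices over it, over any commutative ring. The isotropic generators `p`, `q` of the plane satisfy
`p² = q² = 0` and `pq + qp = 1`, so `pq`, `p`, `q`, `qp` are matrix units, and the twisted vectors
`x (pq - qp)` generate a copy of `CliffordAlgebra Q` commuting with them. When `2` is invertible and
`i² = -1`, the factorisation `a² + b² = (a + ib)(a - ib)` turns each pair of squares into a
hyperbolic plane.
-/

open CliffordAlgebra QuadraticMap

section MatrixUnits

variable {R A B n : Type*} [CommSemiring R] [Semiring A] [Algebra R A] [Semiring B] [Algebra R B]
  [Fintype n] [DecidableEq n]

/-- A complete system of matrix units in a semiring `B`, indexed by `n`. It is the image of the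
standard matrix units under a homomorphism to `B`, so `B` may be trivial. -/
structure IsMatrixUnits (u : Matrix n n B) : Prop where
  mul_eq_ite (a b c d : n) : u a b * u c d = if b = c then u a d else 0
  sum_diag : ∑ a, u a a = 1

namespace IsMatrixUnits

variable {u : Matrix n n B} {j : A →ₐ[R] B}

/-- The algebra homomorphism `M ↦ ∑ a b, j (M a b) * u a b` on matrices over `A` determined by
matrix units `u` in `B` and a homomorphism `j : A →ₐ[R] B` whose range commutes with them. -/
def liftAlgHom (hu : IsMatrixUnits u) (hj : ∀ x a b, Commute (u a b) (j x)) :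
    Matrix n n A →ₐ[R] B :=
  AlgHom.ofLinearMap
    { toFun M := ∑ a, ∑ b, j (M a b) * u a b
      map_add' M N := by simp [add_mul, Finset.sum_add_distrib]
      map_smul' r M := by simp [Finset.smul_sum] }
    (by simp [Matrix.one_apply, apply_ite j, ite_mul, hu.sum_diag])
    (fun M N => by
      have mul_mul_mul (x y : A) (a b c d : n) : j x * u a b * (j y * u c d) =
          if b = c then j (x * y) * u a d else 0 := by
        rw [(hj y a b).mul_mul_mul_comm, hu.mul_eq_ite, map_mul, mul_ite, mul_zero]
      calc
        ∑ a, ∑ d, j ((M * N) a d) * u a d = ∑ a, ∑ d, ∑ b, j (M a b * N b d) * u a d := by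
          simp only [Matrix.mul_apply, map_sum, Finset.sum_mul]
        _ = ∑ a, ∑ b, ∑ d, ∑ c, j (M a b) * u a b * (j (N c d) * u c d) := by
          simp only [mul_mul_mul, Finset.sum_ite_eq, Finset.mem_univ, if_true]
          exact Finset.sum_congr rfl fun a _ => Finset.sum_comm
        _ = (∑ a, ∑ b, j (M a b) * u a b) * ∑ c, ∑ d, j (N c d) * u c d := by
          rw [Finset.sum_comm (f := fun c d => j (N c d) * u c d)]
          simp only [Finset.sum_mul]
          simp only [Finset.mul_sum])

theorem liftAlgHom_apply (hu : IsMatrixUnits u) (hj : ∀ x a b, Commute (u a b) (j x))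
    (M : Matrix n n A) : hu.liftAlgHom hj M = ∑ a, ∑ b, j (M a b) * u a b :=
  rfl

end IsMatrixUnits

end MatrixUnits

/-- The element `p * q - q * p`. For a fermionic pair it is an involution which anticommutes with
`p` and `q`. -/
def chirality {B : Type*} [Ring B] (p q : B) : B :=
  p * q - q * p

section Chirality

variable {B : Type*} [Ring B] {p q x : B}

theorem neg_chirality (p q : B) : -chirality p q = chirality q p :=
  neg_sub _ _

theorem commute_chirality (hxp : x * p = -(p * x)) (hxq : x * q = -(q * x)) :
    Commute x (chirality p q) := by
  have commute_mul {y z : B} (hy : x * y = -(y * x)) (hz : x * z = -(z * x)) :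
      Commute x (y * z) := by
    rw [Commute, SemiconjBy, ← mul_assoc, hy, neg_mul, mul_assoc, hz, mul_neg, neg_neg, mul_assoc]
  exact (commute_mul hxp hxq).sub_right (commute_mul hxq hxp)

end Chirality

/-- A pair of elements subject to the canonical anticommutation relations of one fermionic mode. -/
structure IsFermionicPair {B : Type*} [Semiring B] (p q : B) : Prop where
  mul_self_left : p * p = 0
  mul_self_right : q * q = 0
  mul_add_mul_swap : p * q + q * p = 1

namespace IsFermionicPair

section Semiring

variable {B : Type*} [Semiring B] {p q : B}

theorem symm (h : IsFermionicPair p q) : IsFermionicPair q p :=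
  ⟨h.mul_self_right, h.mul_self_left, add_comm (p * q) (q * p) ▸ h.mul_add_mul_swap⟩

theorem mul_mul_cancel (h : IsFermionicPair p q) : p * (q * p) = p :=
  calc
    p * (q * p) = p * (p * q + q * p) := by
      rw [mul_add, ← mul_assoc p p q, h.mul_self_left, zero_mul, zero_add]
    _ = p := by rw [h.mul_add_mul_swap, mul_one]

theorem isMatrixUnits (h : IsFermionicPair p q) :
    IsMatrixUnits !![p * q, p; q, q * p] where
  mul_eq_ite a b c d := by
    have hpp (z : B) : p * (p * z) = 0 := by rw [← mul_assoc, h.mul_self_left, zero_mul]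
    have hqq (z : B) : q * (q * z) = 0 := by rw [← mul_assoc, h.mul_self_right, zero_mul]
    fin_cases a <;> fin_cases b <;> fin_cases c <;> fin_cases d <;>
      simp [mul_assoc, h.mul_self_left, h.mul_self_right, hpp, hqq, h.mul_mul_cancel,
        h.symm.mul_mul_cancel]
  sum_diag := by simpa using h.mul_add_mul_swap

end Semiring

section Ring

variable {B : Type*} [Ring B] {p q x : B}

theorem left_mul_chirality (h : IsFermionicPair p q) : p * chirality p q = -p := by
  rw [chirality, mul_sub, ← mul_assoc, h.mul_self_left, zero_mul, h.mul_mul_cancel, zero_sub]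

theorem chirality_mul_left (h : IsFermionicPair p q) : chirality p q * p = p := by
  rw [chirality, sub_mul, mul_assoc, mul_assoc, h.mul_self_left, mul_zero, h.mul_mul_cancel,
    sub_zero]

theorem chirality_mul_self (h : IsFermionicPair p q) : chirality p q * chirality p q = 1 :=
  calc
    chirality p q * chirality p q = chirality p q * p * q + chirality q p * q * p := by
      rw [← neg_chirality p q]
      nth_rw 2 [chirality]
      noncomm_ring
    _ = 1 := by rw [h.chirality_mul_left, h.symm.chirality_mul_left, h.mul_add_mul_swap]

theorem commute_mul_chirality_left (h : IsFermionicPair p q) (hxp : x * p = -(p * x))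
    (hxq : x * q = -(q * x)) : Commute (x * chirality p q) p :=
  calc
    x * chirality p q * p = -(p * x) := by rw [mul_assoc, h.chirality_mul_left, hxp]
    _ = p * (x * chirality p q) := by
      rw [(commute_chirality hxp hxq).eq, ← mul_assoc, h.left_mul_chirality, neg_mul]

theorem commute_mul_chirality_right (h : IsFermionicPair p q) (hxp : x * p = -(p * x))
    (hxq : x * q = -(q * x)) : Commute (x * chirality p q) q := by
  rw [← neg_chirality, mul_neg]
  exact (h.symm.commute_mul_chirality_left hxq hxp).neg_left

end Ring

end IsFermionicPair

/-- The hyperbolic plane over `R`: the quadratic form `(a, b) ↦ a * b` on `R × R`. -/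
def hyperbolicPlane (R : Type*) [CommRing R] : QuadraticForm R (R × R) :=
  linMulLin (LinearMap.fst R R R) (LinearMap.snd R R R)

@[simp]
theorem hyperbolicPlane_apply {R : Type*} [CommRing R] (v : R × R) :
    hyperbolicPlane R v = v.1 * v.2 :=
  rfl

section HyperbolicSum

variable {R M : Type*} [CommRing R] [AddCommGroup M] [Module R M] (Q : QuadraticForm R M)

/-- The orthogonal sum of `Q` and a hyperbolic plane. -/
abbrev hyperbolicSum : QuadraticForm R (M × R × R) :=
  Q.prod (hyperbolicPlane R)

namespace hyperbolicSum

/-- The first isotropic generator contributed by the hyperbolic plane. -/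
def p : CliffordAlgebra (hyperbolicSum Q) :=
  ι (hyperbolicSum Q) (0, 1, 0)

/-- The second isotropic generator contributed by the hyperbolic plane. -/
def q : CliffordAlgebra (hyperbolicSum Q) :=
  ι (hyperbolicSum Q) (0, 0, 1)

theorem isFermionicPair : IsFermionicPair (p Q) (q Q) where
  mul_self_left := by simp [p]
  mul_self_right := by simp [q]
  mul_add_mul_swap := by simp [p, q, ι_mul_ι_add_swap, polar]

theorem ι_inl_mul_p (x : M) :
    ι (hyperbolicSum Q) (x, 0) * p Q = -(p Q * ι (hyperbolicSum Q) (x, 0)) :=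
  ι_mul_ι_comm_of_isOrtho (IsOrtho.inl_inr x _)

theorem ι_inl_mul_q (x : M) :
    ι (hyperbolicSum Q) (x, 0) * q Q = -(q Q * ι (hyperbolicSum Q) (x, 0)) :=
  ι_mul_ι_comm_of_isOrtho (IsOrtho.inl_inr x _)

theorem ι_eq_add (x : M) (a b : R) :
    ι (hyperbolicSum Q) (x, a, b) = ι (hyperbolicSum Q) (x, 0) + a • p Q + b • q Q := by
  simp [p, q, ← map_smul, ← map_add]

/-- The embedding of `CliffordAlgebra Q` into the centralizer of `p` and `q`. Twisting each vector
by the chirality element turns anticommutation with `p` and `q` into commutation. -/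
def twistedInl : CliffordAlgebra Q →ₐ[R] CliffordAlgebra (hyperbolicSum Q) :=
  lift Q ⟨LinearMap.mulRight R (chirality (p Q) (q Q)) ∘ₗ ι (hyperbolicSum Q) ∘ₗ
    LinearMap.inl R M (R × R), fun x => by
      have hcomm := commute_chirality (ι_inl_mul_p Q x) (ι_inl_mul_q Q x)
      simp [hcomm.symm.mul_mul_mul_comm, (isFermionicPair Q).chirality_mul_self]⟩

@[simp]
theorem twistedInl_ι (x : M) :
    twistedInl Q (ι Q x) = ι (hyperbolicSum Q) (x, 0) * chirality (p Q) (q Q) :=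
  lift_ι_apply _ _ _

theorem commute_twistedInl {z : CliffordAlgebra (hyperbolicSum Q)}
    (hz : ∀ x, Commute z (twistedInl Q (ι Q x))) (y : CliffordAlgebra Q) :
    Commute z (twistedInl Q y) := by
  induction y using CliffordAlgebra.induction with
  | algebraMap r => simpa using Algebra.commute_algebraMap_right r z
  | ι x => exact hz x
  | mul y₁ y₂ h₁ h₂ => simpa using h₁.mul_right h₂
  | add y₁ y₂ h₁ h₂ => simpa using h₁.add_right h₂

theorem commute_p_twistedInl (y : CliffordAlgebra Q) : Commute (p Q) (twistedInl Q y) :=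
  commute_twistedInl Q (fun x => by
    simpa using ((isFermionicPair Q).commute_mul_chirality_left
      (ι_inl_mul_p Q x) (ι_inl_mul_q Q x)).symm) y

theorem commute_q_twistedInl (y : CliffordAlgebra Q) : Commute (q Q) (twistedInl Q y) :=
  commute_twistedInl Q (fun x => by
    simpa using ((isFermionicPair Q).commute_mul_chirality_right
      (ι_inl_mul_p Q x) (ι_inl_mul_q Q x)).symm) y

/-- The homomorphism from matrices over `CliffordAlgebra Q` given by `twistedInl` on entries and by
the matrix units built from `p` and `q`. -/
def ofMatrix :
    Matrix (Fin 2) (Fin 2) (CliffordAlgebra Q) →ₐ[R] CliffordAlgebra (hyperbolicSum Q) :=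
  (isFermionicPair Q).isMatrixUnits.liftAlgHom (j := twistedInl Q) fun y a b => by
    have hp := commute_p_twistedInl Q y
    have hq := commute_q_twistedInl Q y
    fin_cases a <;> fin_cases b
    exacts [hp.mul_left hq, hp, hq, hq.mul_left hp]

theorem ofMatrix_apply (N : Matrix (Fin 2) (Fin 2) (CliffordAlgebra Q)) :
    ofMatrix Q N = twistedInl Q (N 0 0) * (p Q * q Q) + twistedInl Q (N 0 1) * p Q +
      (twistedInl Q (N 1 0) * q Q + twistedInl Q (N 1 1) * (q Q * p Q)) := by
  simp [ofMatrix, IsMatrixUnits.liftAlgHom_apply, Fin.sum_univ_two]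

/-- The homomorphism to matrices sending the vector `(x, a, b)` to `!![x, a; b, -x]`, whose square
is the scalar `Q x + a * b`. -/
def toMatrix :
    CliffordAlgebra (hyperbolicSum Q) →ₐ[R] Matrix (Fin 2) (Fin 2) (CliffordAlgebra Q) :=
  lift (hyperbolicSum Q)
    ⟨{ toFun v := !![ι Q v.1, algebraMap R _ v.2.1; algebraMap R _ v.2.2, -ι Q v.1]
       map_add' v w := by simp [add_comm]
       map_smul' r v := by simp [Algebra.algebraMap_eq_smul_one, mul_smul] }, fun v => by
      ext a b
      fin_cases a <;> fin_cases b <;>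
        simp [Matrix.algebraMap_matrix_apply, Algebra.algebraMap_eq_smul_one, smul_smul,
          add_smul, mul_comm, add_comm]⟩

theorem toMatrix_ι (v : M × R × R) :
    toMatrix Q (ι (hyperbolicSum Q) v) =
      !![ι Q v.1, algebraMap R _ v.2.1; algebraMap R _ v.2.2, -ι Q v.1] :=
  lift_ι_apply _ _ _

theorem toMatrix_p : toMatrix Q (p Q) = !![0, 1; 0, 0] := by
  simp [p, toMatrix_ι]

theorem toMatrix_q : toMatrix Q (q Q) = !![0, 0; 1, 0] := by
  simp [q, toMatrix_ι]

theorem toMatrix_chirality : toMatrix Q (chirality (p Q) (q Q)) = !![1, 0; 0, -1] := by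
  simp [chirality, toMatrix_p, toMatrix_q]

theorem toMatrix_twistedInl (y : CliffordAlgebra Q) :
    toMatrix Q (twistedInl Q y) = Matrix.scalar (Fin 2) y := by
  induction y using CliffordAlgebra.induction with
  | algebraMap r => simp [Matrix.algebraMap_eq_diagonal, Pi.algebraMap_def]
  | ι x => simp [toMatrix_ι, toMatrix_chirality, Matrix.diagonal_fin_two]
  | mul y₁ y₂ h₁ h₂ => rw [map_mul, map_mul, map_mul, h₁, h₂]
  | add y₁ y₂ h₁ h₂ => rw [map_add, map_add, map_add, h₁, h₂]

theorem toMatrix_comp_ofMatrix : (toMatrix Q).comp (ofMatrix Q) = AlgHom.id R _ := by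
  ext N a b
  fin_cases a <;> fin_cases b <;>
    simp [ofMatrix_apply, toMatrix_p, toMatrix_q, toMatrix_twistedInl]

theorem ofMatrix_comp_toMatrix : (ofMatrix Q).comp (toMatrix Q) = AlgHom.id R _ := by
  refine CliffordAlgebra.hom_ext (LinearMap.ext ?_)
  rintro ⟨x, a, b⟩
  have untwist : twistedInl Q (ι Q x) * chirality (p Q) (q Q) = ι (hyperbolicSum Q) (x, 0) := by
    rw [twistedInl_ι, mul_assoc, (isFermionicPair Q).chirality_mul_self, mul_one]
  calc
    ofMatrix Q (toMatrix Q (ι (hyperbolicSum Q) (x, a, b))) =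
        twistedInl Q (ι Q x) * chirality (p Q) (q Q) + a • p Q + b • q Q := by
      simp only [toMatrix_ι, ofMatrix_apply, Matrix.of_apply, Matrix.cons_val',
        Matrix.cons_val_zero, Matrix.cons_val_one, Matrix.cons_val_fin_one, AlgHom.commutes,
        ← Algebra.smul_def, map_neg, neg_mul, chirality, mul_sub]
      abel
    _ = ι (hyperbolicSum Q) (x, a, b) := by rw [untwist, ← ι_eq_add]

/-- Adjoining a hyperbolic plane to a quadratic form passes to `2 × 2` matrices over its Clifford
algebra. -/
def equivMatrix :
    CliffordAlgebra (hyperbolicSum Q) ≃ₐ[R] Matrix (Fin 2) (Fin 2) (CliffordAlgebra Q) :=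
  AlgEquiv.ofAlgHom (toMatrix Q) (ofMatrix Q) (toMatrix_comp_ofMatrix Q) (ofMatrix_comp_toMatrix Q)

end hyperbolicSum

end HyperbolicSum

section SumSquares

variable (R : Type*) [CommRing R]

/-- The sum-of-squares form on `Fin n → R`. -/
abbrev sumSquares (n : ℕ) : QuadraticForm R (Fin n → R) :=
  weightedSumSquares R fun _ : Fin n => (1 : R)

variable {R}

/-- When `i * i = -1` and `2` is invertible, `a² + b² = (a + ib)(a - ib)` is a hyperbolic plane,
split off here from the first two coordinates. -/
def sumSquaresIsometryEquiv [Invertible (2 : R)] {i : R} (hi : i * i = -1) (n : ℕ) :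
    (sumSquares R (n + 2)).IsometryEquiv (hyperbolicSum (sumSquares R n)) where
  toFun f := (fun k => f k.succ.succ, f 0 + i * f 1, f 0 - i * f 1)
  invFun v := Fin.cons (⅟2 * (v.2.1 + v.2.2)) (Fin.cons (-(⅟2 * i * (v.2.1 - v.2.2))) v.1)
  map_add' f g := by ext <;> simp <;> ring
  map_smul' r f := by ext <;> simp <;> ring
  left_inv f := by
    have half : (⅟2 : R) * 2 = 1 := invOf_mul_self 2
    ext k
    refine Fin.cases ?_ (Fin.cases ?_ fun _ => rfl) k
    · simp only [add_add_sub_cancel, add_sub_sub_cancel, Fin.cons_zero]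
      linear_combination f 0 * half
    · simp only [add_add_sub_cancel, add_sub_sub_cancel, Fin.succ_zero_eq_one, Fin.cons_one,
        Fin.cons_zero]
      linear_combination f 1 * half - 2 * ⅟2 * f 1 * hi
  right_inv v := by
    have half : (⅟2 : R) * 2 = 1 := invOf_mul_self 2
    ext k
    · rfl
    · simp only [Fin.cons_zero, Fin.cons_one, mul_neg]
      linear_combination v.2.1 * half - ⅟2 * (v.2.1 - v.2.2) * hi
    · simp only [Fin.cons_zero, Fin.cons_one, mul_neg, sub_neg_eq_add]
      linear_combination v.2.2 * half + ⅟2 * (v.2.1 - v.2.2) * hi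
  map_app' f := by
    simp only [QuadraticMap.prod_apply, weightedSumSquares_apply, smul_eq_mul, one_mul,
      hyperbolicPlane_apply, Fin.sum_univ_succ, Fin.succ_zero_eq_one]
    linear_combination -(f 1 * f 1) * hi

end SumSquares

/-- The Clifford algebra of a form on a zero module is its ring of scalars. -/
def cliffordAlgebraEquivOfSubsingleton {R M : Type*} [CommRing R] [AddCommGroup M] [Module R M]
    [Subsingleton M] (Q : QuadraticForm R M) : CliffordAlgebra Q ≃ₐ[R] R :=
  AlgEquiv.ofAlgHom (lift Q ⟨0, fun x => by simp [Subsingleton.elim x 0]⟩) (Algebra.ofId R _)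
    (by ext) (CliffordAlgebra.hom_ext (Subsingleton.elim _ _))

/-- Matrices indexed by a singleton are scalars: `Matrix.uniqueAlgEquiv` for arbitrary `Fintype` and
`DecidableEq` instances on the index type, such as those of `Fin 1`. -/
def matrixAlgEquivOfUnique (R A n : Type*) [CommSemiring R] [Semiring A] [Algebra R A] [Unique n]
    [Fintype n] [DecidableEq n] : Matrix n n A ≃ₐ[R] A where
  __ := Matrix.uniqueEquiv
  map_mul' M N := by simp [Matrix.mul_apply]
  map_add' M N := by simp
  commutes' r := by simp [Matrix.algebraMap_matrix_apply]

theorem complexClifford_even_isomorphic_matrix_general {R : Type*} [CommRing R]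
    [Invertible (2 : R)] {i : R} (hi : i * i = -1) (ν : ℕ) :
    Nonempty (CliffordAlgebra (sumSquares R (2 * ν)) ≃ₐ[R]
      Matrix (Fin (2 ^ ν)) (Fin (2 ^ ν)) R) := by
  induction ν with
  | zero =>
    exact ⟨(cliffordAlgebraEquivOfSubsingleton (sumSquares R 0)).trans
      ((matrixAlgEquivOfUnique R R (Fin 1)).symm.trans
        (Matrix.reindexAlgEquiv R R (finCongr (pow_zero 2).symm)))⟩
  | succ ν ih =>
    obtain ⟨e⟩ := ih
    exact ⟨(equivOfIsometry (sumSquaresIsometryEquiv hi (2 * ν))).trans <|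
      (hyperbolicSum.equivMatrix _).trans <| e.mapMatrix.trans <|
      (Matrix.compAlgEquiv (Fin 2) (Fin (2 ^ ν)) R R).trans <|
      Matrix.reindexAlgEquiv R R (finProdFinEquiv.trans (finCongr (pow_succ' 2 ν).symm))⟩

/-- `Cℂ(2ν) ≅ M_{2^ν}(ℂ)`. -/
theorem complexClifford_even_isomorphic_matrix (ν : ℕ) :
    Nonempty (ComplexClifford (2 * ν) ≃ₐ[ℂ] Matrix (Fin (2 ^ ν)) (Fin (2 ^ ν)) ℂ) :=
  complexClifford_even_isomorphic_matrix_general Complex.I_mul_I ν
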